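/- arXiv:1207.5893 — 3 statements merged into one kernel-verified Lean document; each statement's English description precedes it below -/
import Mathlib

section
/- Fix d ≥ 2 and let 𝓑_d be the set of infinite, connected, undirected graphs of maximum degree at most d. Let P be a local property of rooted graphs such that every G ∈ 𝓑_d has some vertex w with (G,w) ∈ P. Then for every G ∈ 𝓑_d there exist a radius r₀ and infinitely many distinct vertices w₁, w₂, ... of G such that (G, w_n) ∈ P^{(r₀)} for all n. -/
/-!
The argument is a compactness argument, with the limit graph realised as an ultrapower.

Choose an injective sequence of vertices `v n` of `G` and form the ultrapower of `G` along a
nonprincipal ultrafilter on `ℕ`. The connected component `H` of the germ of `v` lies in `𝓑_d`: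
degrees are bounded by `d` because `d + 1` distinct neighbours of a germ would give, at
some index, `d + 1` distinct neighbours of a vertex of `G`, and `H` is
infinite because in `G` every ball is strictly contained in the next one, so that this holds in
`H` too (`germ_mem_dBall` is the instance of Łoś's theorem for membership in balls). Hence `H` has
a vertex `x` with property `P`, with some radius `r`. Choosing representatives of the finitely many
germs in the `r`-ball of `x` identifies, for almost every `n`, this ball with the `r`-ball in `G`
of the `n`-th value `w n` of a representative of `x` (`eventually_ballIso`); therefore
`(G, w n)` has `P` with the same radius `r`. Finally `w n` is at bounded distance from `v n` for
almost every `n`, the `v n` are distinct and balls in `G` are finite, so `w` takes infinitely many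
values on any set of the ultrafilter.
-/

open Set

noncomputable section

/-- The ball of radius `r` around `u` in the graph with adjacency relation `Adj`: vertices
reachable from `u` by a path of length at most `r`. -/
def dBall {V : Type} (Adj : V → V → Prop) (u : V) (r : ℕ) : Set V :=
  {v | ∃ m ≤ r, ∃ f : ℕ → V, f 0 = u ∧ f m = v ∧ ∀ i < m, Adj (f i) (f (i + 1))}

/-- A rooted isomorphism between the balls `B_r(G, u)` and `B_r(G', u')` (as induced rooted
subgraphs): a root-preserving bijection between the balls preserving adjacency. -/
def BallIso {V V' : Type} (Adj : V → V → Prop) (u : V)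
    (Adj' : V' → V' → Prop) (u' : V') (r : ℕ) : Prop :=
  ∃ h : V → V', h u = u' ∧ Set.BijOn h (dBall Adj u r) (dBall Adj' u' r) ∧
    ∀ a ∈ dBall Adj u r, ∀ b ∈ dBall Adj u r, (Adj a b ↔ Adj' (h a) (h b))

/-- `(G, u)` has the property `P` with radius `r` (i.e. `(G,u) ∈ P^{(r)}`): any rooted graph
whose `r`-ball around the root is isomorphic to that of `(G, u)` has the property `P`. -/
def HasWithRadius (P : ∀ V : Type, SimpleGraph V → V → Prop)
    {V : Type} (G : SimpleGraph V) (u : V) (r : ℕ) : Prop :=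
  ∀ (V' : Type) (G' : SimpleGraph V') (u' : V'), BallIso G.Adj u G'.Adj u' r → P V' G' u'

/-- `P` is a local property of rooted graphs: every rooted graph with property `P` has it
with some radius `r > 0`. -/
def IsLocalProperty (P : ∀ V : Type, SimpleGraph V → V → Prop) : Prop :=
  ∀ (V : Type) (G : SimpleGraph V) (u : V), P V G u → ∃ r : ℕ, 0 < r ∧ HasWithRadius P G u r

/-- Membership in `𝓑_d`: an infinite, connected, undirected graph all of whose degrees are
at most `d`. -/
def MemBd (d : ℕ) (V : Type) (G : SimpleGraph V) : Prop :=
  Infinite V ∧ G.Connected ∧ ∀ v : V, (G.neighborSet v).Finite ∧ (G.neighborSet v).ncard ≤ d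

/-! ### Balls -/

lemma dBall_zero {V : Type} (Adj : V → V → Prop) (u v : V) : v ∈ dBall Adj u 0 ↔ v = u := by
  constructor
  · rintro ⟨m, hm, f, h0, hv, -⟩
    obtain rfl : m = 0 := by omega
    exact hv.symm.trans h0
  · rintro rfl
    exact ⟨0, le_rfl, fun _ => v, rfl, rfl, by simp⟩

lemma dBall_succ {V : Type} (Adj : V → V → Prop) (u v : V) (k : ℕ) :
    v ∈ dBall Adj u (k + 1) ↔ v ∈ dBall Adj u k ∨ ∃ w ∈ dBall Adj u k, Adj w v := by
  constructor
  · rintro ⟨m, hm, f, h0, hv, hf⟩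
    rcases Nat.lt_or_ge k m with h | h
    · obtain rfl : m = k + 1 := by omega
      exact Or.inr ⟨f k, ⟨k, le_rfl, f, h0, rfl, fun i hi => hf i (by omega)⟩,
        hv ▸ hf k (by omega)⟩
    · exact Or.inl ⟨m, h, f, h0, hv, hf⟩
  · rintro (⟨m, hm, f, h0, hv, hf⟩ | ⟨w, ⟨m, hm, f, h0, hv, hf⟩, hw⟩)
    · exact ⟨m, by omega, f, h0, hv, hf⟩
    · refine ⟨m + 1, by omega, Function.update f (m + 1) v, ?_, by simp, ?_⟩
      · rw [Function.update_of_ne (by omega)]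
        exact h0
      · intro i hi
        rw [Function.update_of_ne (by omega)]
        rcases Nat.lt_or_ge i m with h | h
        · rw [Function.update_of_ne (by omega)]
          exact hf i h
        · obtain rfl : i = m := by omega
          rw [Function.update_self, hv]
          exact hw

lemma dBall_mono {V : Type} (Adj : V → V → Prop) (u : V) : Monotone (dBall Adj u) :=
  monotone_nat_of_le_succ fun k v hv => (dBall_succ Adj u v k).2 (Or.inl hv)

lemma dBall_finite {V : Type} (G : SimpleGraph V) (h : ∀ v, (G.neighborSet v).Finite) (u : V)
    (k : ℕ) : (dBall G.Adj u k).Finite := by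
  induction k with
  | zero => exact (Set.finite_singleton u).subset fun v hv => (dBall_zero _ _ _).1 hv
  | succ k ih =>
    refine (ih.union (ih.biUnion fun w _ => h w)).subset fun v hv => ?_
    rcases (dBall_succ _ _ _ _).1 hv with hv | ⟨w, hw, hv⟩
    · exact Or.inl hv
    · exact Or.inr (Set.mem_biUnion hw hv)

lemma exists_mem_dBall_iff {V : Type} (G : SimpleGraph V) (u v : V) :
    (∃ k, v ∈ dBall G.Adj u k) ↔ G.Reachable u v := by
  constructor
  · rintro ⟨k, hk⟩
    induction k generalizing v with
    | zero => rw [(dBall_zero _ _ _).1 hk]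
    | succ k ih =>
      rcases (dBall_succ _ _ _ _).1 hk with hv | ⟨w, hw, hv⟩
      · exact ih v hv
      · exact (ih w hw).trans hv.reachable
  · intro h
    rw [SimpleGraph.reachable_iff_reflTransGen] at h
    induction h with
    | refl => exact ⟨0, (dBall_zero _ _ _).2 rfl⟩
    | tail _ hab ih =>
      obtain ⟨k, hk⟩ := ih
      exact ⟨k + 1, (dBall_succ _ _ _ _).2 (Or.inr ⟨_, hk, hab⟩)⟩

/-- In an infinite, connected, locally finite graph the balls around a vertex never stabilise,
for a ball closed under adjacency would be a finite set containing all vertices. -/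
lemma exists_mem_dBall_succ_not_mem {V : Type} [Infinite V] (G : SimpleGraph V)
    (hc : G.Connected) (h : ∀ v, (G.neighborSet v).Finite) (u : V) (k : ℕ) :
    ∃ v ∈ dBall G.Adj u (k + 1), v ∉ dBall G.Adj u k := by
  by_contra! hcon
  have hall : ∀ j, dBall G.Adj u j ⊆ dBall G.Adj u k := by
    intro j
    induction j with
    | zero => exact dBall_mono _ _ (Nat.zero_le k)
    | succ j ih =>
      intro v hv
      rcases (dBall_succ _ _ _ _).1 hv with hv | ⟨w, hw, hv⟩
      · exact ih hv
      · exact hcon v ((dBall_succ _ _ _ _).2 (Or.inr ⟨w, ih hw, hv⟩))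
  refine Set.infinite_univ ((dBall_finite G h u k).subset fun v _ => ?_)
  obtain ⟨j, hj⟩ := (exists_mem_dBall_iff G u v).2 (hc.preconnected u v)
  exact hall j hj

lemma BallIso.trans {V₁ V₂ V₃ : Type} {A₁ : V₁ → V₁ → Prop} {A₂ : V₂ → V₂ → Prop}
    {A₃ : V₃ → V₃ → Prop} {u₁ : V₁} {u₂ : V₂} {u₃ : V₃} {r : ℕ}
    (h : BallIso A₁ u₁ A₂ u₂ r) (h' : BallIso A₂ u₂ A₃ u₃ r) : BallIso A₁ u₁ A₃ u₃ r := by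
  obtain ⟨f, hu, hb, ha⟩ := h
  obtain ⟨g, hu', hb', ha'⟩ := h'
  refine ⟨g ∘ f, by simp [hu, hu'], hb'.comp hb, fun a hA b hB => ?_⟩
  exact (ha a hA b hB).trans (ha' _ (hb.mapsTo hA) _ (hb.mapsTo hB))

lemma dBall_connectedComponent {V : Type} {G : SimpleGraph V} (C : G.ConnectedComponent)
    (x y : C) (k : ℕ) :
    y ∈ dBall C.toSimpleGraph.Adj x k ↔ (y : V) ∈ dBall G.Adj (x : V) k := by
  induction k generalizing y with
  | zero => rw [dBall_zero, dBall_zero, Subtype.ext_iff]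
  | succ k ih =>
    rw [dBall_succ, dBall_succ, ih]
    refine or_congr_right ⟨?_, ?_⟩
    · rintro ⟨w, hw, hwy⟩
      exact ⟨w, (ih w).1 hw, hwy⟩
    · rintro ⟨w, hw, hwy⟩
      have hwC : w ∈ C.supp := (C.mem_supp_congr_adj hwy).2 y.2
      exact ⟨⟨w, hwC⟩, (ih ⟨w, hwC⟩).2 hw, hwy⟩

/-! ### The ultrapower of a graph -/

/-- The vertices of the ultrapower of a graph on `V`: germs of sequences of vertices along a
nonprincipal ultrafilter on `ℕ`. -/
abbrev UPow (V : Type) : Type := Filter.Germ (Filter.hyperfilter ℕ : Filter ℕ) V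

/-- The ultrapower of a graph: two germs are adjacent when their representatives are adjacent
at almost every index. -/
def ultraGraph {V : Type} (G : SimpleGraph V) : SimpleGraph (UPow V) where
  Adj x y := Filter.Germ.LiftRel G.Adj x y
  symm := ⟨fun x y => by
    induction x using Filter.Germ.inductionOn
    induction y using Filter.Germ.inductionOn
    simp only [Filter.Germ.liftRel_coe]
    exact fun h => h.mono fun _ h => h.symm⟩
  loopless := ⟨fun x => by
    induction x using Filter.Germ.inductionOn
    simpa [Filter.Germ.liftRel_coe] using (Filter.hyperfilter ℕ).neBot.ne⟩

/-- A chosen sequence representing a germ. -/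
def rep {V : Type} (x : UPow V) : ℕ → V := Quotient.out x

lemma coe_rep {V : Type} (x : UPow V) : ((rep x : ℕ → V) : UPow V) = x := Quotient.out_eq x

lemma ultraGraph_adj_coe {V : Type} (G : SimpleGraph V) (f g : ℕ → V) :
    (ultraGraph G).Adj (f : UPow V) (g : UPow V) ↔
      ∀ᶠ n in (Filter.hyperfilter ℕ : Filter ℕ), G.Adj (f n) (g n) :=
  Filter.Germ.liftRel_coe

/-- Łoś's theorem for membership in a ball. -/
lemma germ_mem_dBall {V : Type} (G : SimpleGraph V) (f g : ℕ → V) (k : ℕ) :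
    (g : UPow V) ∈ dBall (ultraGraph G).Adj (f : UPow V) k ↔
      ∀ᶠ n in (Filter.hyperfilter ℕ : Filter ℕ), g n ∈ dBall G.Adj (f n) k := by
  induction k generalizing g with
  | zero =>
    simp only [dBall_zero]
    exact Filter.Germ.coe_eq
  | succ k ih =>
    simp only [dBall_succ, Ultrafilter.eventually_or, ih]
    refine or_congr_right ⟨?_, ?_⟩
    · rintro ⟨w, hw, hwg⟩
      induction w using Filter.Germ.inductionOn with | _ w
      filter_upwards [(ih w).1 hw, (ultraGraph_adj_coe G w g).1 hwg] with n h1 h2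
      exact ⟨w n, h1, h2⟩
    · intro h
      obtain ⟨w, hw⟩ := h.choice
      refine ⟨(w : UPow V), (ih w).2 (hw.mono fun _ h => h.1), ?_⟩
      exact (ultraGraph_adj_coe G w g).2 (hw.mono fun _ h => h.2)

lemma eventually_injOn_rep {V : Type} {S : Set (UPow V)} (hS : S.Finite) :
    ∀ᶠ n in (Filter.hyperfilter ℕ : Filter ℕ), Set.InjOn (fun x => rep x n) S := by
  have : ∀ᶠ n in (Filter.hyperfilter ℕ : Filter ℕ), ∀ x ∈ S, ∀ y ∈ S,
      rep x n = rep y n → x = y := by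
    refine (Filter.eventually_all_finite hS).2 fun x _ =>
      (Filter.eventually_all_finite hS).2 fun y _ => ?_
    by_cases hxy : x = y
    · exact Filter.Eventually.of_forall fun _ _ => hxy
    · have : ¬ ∀ᶠ n in (Filter.hyperfilter ℕ : Filter ℕ), rep x n = rep y n := fun h =>
        hxy (by rw [← coe_rep x, ← coe_rep y]; exact Filter.Germ.coe_eq.2 h)
      filter_upwards [Ultrafilter.eventually_not.2 this] with n hn h
      exact absurd h hn
  exact this.mono fun n h x hx y hy => h x hx y hy

lemma eventually_adj_rep {V : Type} (G : SimpleGraph V) {S : Set (UPow V)} (hS : S.Finite) :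
    ∀ᶠ n in (Filter.hyperfilter ℕ : Filter ℕ), ∀ x ∈ S, ∀ y ∈ S,
      ((ultraGraph G).Adj x y ↔ G.Adj (rep x n) (rep y n)) := by
  refine (Filter.eventually_all_finite hS).2 fun x _ =>
    (Filter.eventually_all_finite hS).2 fun y _ => ?_
  have key := ultraGraph_adj_coe G (rep x) (rep y)
  rw [coe_rep, coe_rep] at key
  by_cases hxy : (ultraGraph G).Adj x y
  · exact (key.1 hxy).mono fun n h => iff_of_true hxy h
  · exact (Ultrafilter.eventually_not.2 (mt key.2 hxy)).mono fun n h => iff_of_false hxy h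

/-! ### Components of the ultrapower as local limits -/

lemma ultraGraph_degree {V : Type} {G : SimpleGraph V} {d : ℕ}
    (h : ∀ v, (G.neighborSet v).encard ≤ d) (x : UPow V) :
    ((ultraGraph G).neighborSet x).encard ≤ d := by
  by_contra! hcon
  obtain ⟨t, ht, hcard⟩ := Set.exists_subset_encard_eq (Order.add_one_le_of_lt hcon)
  have hfin : t.Finite := Set.finite_of_encard_eq_coe (k := d + 1) (by simpa using hcard)
  obtain ⟨n, hinj, hadj⟩ := ((eventually_injOn_rep hfin).and
    (eventually_adj_rep G (hfin.insert x))).exists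
  have hsub : (fun y => rep y n) '' t ⊆ G.neighborSet (rep x n) := by
    rintro _ ⟨y, hy, rfl⟩
    exact (hadj x (Set.mem_insert _ _) y (Set.mem_insert_of_mem _ hy)).1 (ht hy)
  have hle := (Set.encard_le_encard hsub).trans (h _)
  rw [hinj.encard_image, hcard] at hle
  have : d + 1 ≤ d := by exact_mod_cast hle
  omega

/-- A finite ball of the ultrapower is isomorphic, at almost every index, to the corresponding
ball of `G`, via evaluation of representatives. -/
lemma eventually_ballIso {V : Type} (G : SimpleGraph V)
    (C : (ultraGraph G).ConnectedComponent) (x : C) (r : ℕ)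
    (hfin : (dBall (ultraGraph G).Adj (x : UPow V) r).Finite) :
    ∀ᶠ n in (Filter.hyperfilter ℕ : Filter ℕ),
      BallIso C.toSimpleGraph.Adj x G.Adj (rep (x : UPow V) n) r := by
  have hlos : ∀ g : ℕ → V, (g : UPow V) ∈ dBall (ultraGraph G).Adj (x : UPow V) r ↔
      ∀ᶠ n in (Filter.hyperfilter ℕ : Filter ℕ), g n ∈ dBall G.Adj (rep (x : UPow V) n) r := by
    intro g
    have := germ_mem_dBall G (rep (x : UPow V)) g r
    rwa [coe_rep] at this
  have hmaps : ∀ᶠ n in (Filter.hyperfilter ℕ : Filter ℕ),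
      ∀ y ∈ dBall (ultraGraph G).Adj (x : UPow V) r,
        rep y n ∈ dBall G.Adj (rep (x : UPow V) n) r := by
    refine (Filter.eventually_all_finite hfin).2 fun y hy => (hlos _).1 ?_
    rwa [coe_rep]
  -- Points missed at almost every index would form a germ lying in the ball of the ultrapower,
  -- hence represented by one of the chosen sequences.
  have hsurj : ∀ᶠ n in (Filter.hyperfilter ℕ : Filter ℕ),
      ∀ v ∈ dBall G.Adj (rep (x : UPow V) n) r,
        ∃ y ∈ dBall (ultraGraph G).Adj (x : UPow V) r, rep y n = v := by
    by_contra hcon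
    have hcon' := Ultrafilter.eventually_not.2 hcon
    push Not at hcon'
    obtain ⟨g, hg⟩ := hcon'.choice
    have hmem := (hlos g).2 (hg.mono fun _ h => h.1)
    have heq : ∀ᶠ n in (Filter.hyperfilter ℕ : Filter ℕ), rep (g : UPow V) n = g n :=
      Filter.Germ.coe_eq.1 (coe_rep (g : UPow V))
    obtain ⟨n, h1, h2⟩ := (hg.and heq).exists
    exact h1.2 _ hmem h2
  filter_upwards [hmaps, hsurj, eventually_injOn_rep hfin, eventually_adj_rep G hfin] with
    n h1 h2 h3 h4
  refine ⟨fun y => rep (y : UPow V) n, rfl, ⟨?_, ?_, ?_⟩, ?_⟩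
  · exact fun y hy => h1 _ ((dBall_connectedComponent C x y r).1 hy)
  · exact fun y hy z hz hyz => Subtype.ext (h3 ((dBall_connectedComponent C x y r).1 hy)
      ((dBall_connectedComponent C x z r).1 hz) hyz)
  · intro v hv
    obtain ⟨y, hy, rfl⟩ := h2 v hv
    have hyC : y ∈ C.supp :=
      ((C.mem_supp_iff y).2 ((SimpleGraph.ConnectedComponent.sound
        ((exists_mem_dBall_iff _ _ _).1 ⟨r, hy⟩)).symm.trans ((C.mem_supp_iff _).1 x.2)))
    exact ⟨⟨y, hyC⟩, (dBall_connectedComponent C x ⟨y, hyC⟩ r).2 hy, rfl⟩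
  · exact fun y hy z hz => h4 _ ((dBall_connectedComponent C x y r).1 hy) _
      ((dBall_connectedComponent C x z r).1 hz)

/-- Every component of the ultrapower of a graph in `𝓑_d` is again in `𝓑_d`. -/
lemma memBd_component {V : Type} {G : SimpleGraph V} {d : ℕ} (hG : MemBd d V G)
    (C : (ultraGraph G).ConnectedComponent) : MemBd d C C.toSimpleGraph := by
  obtain ⟨hinf, hconn, hdeg⟩ := hG
  refine ⟨?_, C.connected_toSimpleGraph, fun x => ?_⟩
  · obtain ⟨x, hx⟩ := C.nonempty_supp
    have hstrict : ∀ k, ∃ y ∈ dBall (ultraGraph G).Adj x (k + 1),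
        y ∉ dBall (ultraGraph G).Adj x k := by
      intro k
      choose g hg hg' using fun n =>
        exists_mem_dBall_succ_not_mem G hconn (fun v => (hdeg v).1) (rep x n) k
      have hlos := fun j => germ_mem_dBall G (rep x) g j
      simp only [coe_rep] at hlos
      refine ⟨g, (hlos _).2 (Filter.Eventually.of_forall hg), fun h => ?_⟩
      obtain ⟨n, hn⟩ := ((hlos k).1 h).exists
      exact hg' n hn
    choose y hy hy' using hstrict
    have hyC : ∀ k, y k ∈ C.supp := fun k =>
      ((C.mem_supp_iff _).2 ((SimpleGraph.ConnectedComponent.sound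
        ((exists_mem_dBall_iff _ _ _).1 ⟨k + 1, hy k⟩)).symm.trans ((C.mem_supp_iff _).1 hx)))
    have hne : ∀ i j, i < j → y i ≠ y j := fun i j hij h =>
      hy' j (h ▸ dBall_mono _ x (Nat.succ_le_of_lt hij) (hy i))
    refine Infinite.of_injective (fun k => (⟨y k, hyC k⟩ : C)) fun i j hij => ?_
    have hij' : y i = y j := congrArg Subtype.val hij
    by_contra hcon
    rcases Nat.lt_or_gt_of_ne hcon with h | h
    · exact hne i j h hij'
    · exact hne j i h hij'.symm
  · rw [← Set.encard_le_coe_iff_finite_ncard_le]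
    have hle := ultraGraph_degree
      (fun v => Set.encard_le_coe_iff_finite_ncard_le.2 (hdeg v)) (x : UPow V)
    refine le_trans ?_ hle
    rw [← Subtype.val_injective.encard_image]
    refine Set.encard_le_encard ?_
    rintro _ ⟨y, hy, rfl⟩
    exact hy

/-- A sequence staying almost always within bounded distance of an injective sequence takes
infinitely many values on every set of the ultrafilter. -/
lemma infinite_image_of_mem_dBall {V : Type} {G : SimpleGraph V}
    (hfin : ∀ v, (G.neighborSet v).Finite) {v w : ℕ → V} (hv : Function.Injective v) {k : ℕ}
    (hvw : ∀ᶠ n in (Filter.hyperfilter ℕ : Filter ℕ), v n ∈ dBall G.Adj (w n) k)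
    {A : Set ℕ} (hA : A ∈ (Filter.hyperfilter ℕ : Filter ℕ)) : (w '' A).Infinite := by
  intro hF
  have hB : (⋃ c ∈ w '' A, dBall G.Adj c k).Finite :=
    hF.biUnion fun c _ => dBall_finite G hfin c k
  refine Filter.notMem_hyperfilter_of_finite (hB.preimage hv.injOn) ?_
  filter_upwards [hvw, hA] with n h1 h2
  exact Set.mem_biUnion (Set.mem_image_of_mem w h2) h1

/-- **Lemma 4.3 of Mossel–Sly–Tamuz (topological lemma).** Fix `d ≥ 2` and let `P` be a local
property of rooted graphs such that every `G ∈ 𝓑_d` has a vertex `w` with `(G, w) ∈ P`.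
Then every `G ∈ 𝓑_d` has a radius `r₀` and infinitely many distinct vertices `w₁, w₂, …`
with `(G, w_n) ∈ P^{(r₀)}` for all `n`. -/
theorem local_property_infinitely_many_vertices (d : ℕ) (hd : 2 ≤ d)
    (P : ∀ V : Type, SimpleGraph V → V → Prop) (hP : IsLocalProperty P)
    (hex : ∀ (V : Type) (G : SimpleGraph V), MemBd d V G → ∃ w : V, P V G w) :
    ∀ (V : Type) (G : SimpleGraph V), MemBd d V G →
      ∃ (r₀ : ℕ) (w : ℕ → V), Function.Injective w ∧
        ∀ n : ℕ, HasWithRadius P G (w n) r₀ := by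
  intro V G hG
  have hinf : Infinite V := hG.1
  obtain ⟨v⟩ : Nonempty (ℕ ↪ V) := ⟨Infinite.natEmbedding V⟩
  let C := (ultraGraph G).connectedComponentMk ((v : ℕ → V) : UPow V)
  have hC : MemBd d C C.toSimpleGraph := memBd_component hG C
  obtain ⟨x, hx⟩ := hex C C.toSimpleGraph hC
  obtain ⟨r, -, hr⟩ := hP _ _ _ hx
  have hdeg := ultraGraph_degree
    (fun v => Set.encard_le_coe_iff_finite_ncard_le.2 (hG.2.2 v))
  have hA := eventually_ballIso G C x r
    (dBall_finite _ (fun y => (Set.encard_le_coe_iff_finite_ncard_le.1 (hdeg y)).1) _ r)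
  obtain ⟨k, hk⟩ := (exists_mem_dBall_iff (ultraGraph G) (x : UPow V) ((v : ℕ → V) : UPow V)).2
    (SimpleGraph.ConnectedComponent.exact ((C.mem_supp_iff _).1 x.2))
  rw [← coe_rep (x : UPow V), germ_mem_dBall] at hk
  have hI := infinite_image_of_mem_dBall (fun v => (hG.2.2 v).1) v.injective hk hA
  refine ⟨r, fun n => (hI.natEmbedding _ n : V),
    Subtype.val_injective.comp (hI.natEmbedding _).injective, fun n => ?_⟩
  obtain ⟨m, hm, hmn⟩ := (hI.natEmbedding _ n).2
  intro V' G' u' hiso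
  beta_reduce at hiso
  rw [← hmn] at hiso
  exact hr V' G' u' (BallIso.trans hm hiso)
end
end

section
/- Let A, B and C be random variables on a common probability space, with A and B taking values in the same measurable space. If P(A ≠ B) ≤ δ and the pair (B, C) is δ'-independent, then the pair (A, C) is (2δ + δ')-independent. -/
/-! For a measurable set `S`, the triangle inequality splits the discrepancy between the joint
law of `(A, C)` and the product of the marginals into three terms: joint law of `(A, C)` against
that of `(B, C)`, joint law of `(B, C)` against the product of its marginals, and this product
against the product of the marginals of `A` and `C`. The middle term is at most `δ'` by
hypothesis. The first is at most `P(A ≠ B)` because the two pairs agree off `{A ≠ B}`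
(`map_apply_le_add`). For the last one, the same bound applies to each section of `S` at a
fixed value of `C`, and integrating over the law of `C` preserves it (`prod_apply_le_add`). -/

open MeasureTheory ProbabilityTheory Filter Set

noncomputable section

/-- The total variation distance between two measures:
`d_TV(μ, ν) = sup { |μ(s) - ν(s)| : s measurable }`. -/
noncomputable def tvDist {α : Type} [MeasurableSpace α] (μ ν : Measure α) : ℝ :=
  ⨆ s : {s : Set α // MeasurableSet s}, |(μ s.1).toReal - (ν s.1).toReal|

/-- The pair of random variables `(X, Y)` is `δ`-independent: the total variation distance
between the joint law of `(X, Y)` and the product of the marginal laws is at most `δ`. -/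
def PairIndep {Θ α β : Type} [MeasurableSpace Θ] [MeasurableSpace α] [MeasurableSpace β]
    (Pr : Measure Θ) (X : Θ → α) (Y : Θ → β) (δ : ℝ) : Prop :=
  tvDist (Pr.map fun ω => (X ω, Y ω)) ((Pr.map X).prod (Pr.map Y)) ≤ δ

/-- The family of random variables `(X i)` is `δ`-independent: the total variation distance
between the joint law and the product of the marginal laws is at most `δ`. -/
def FamIndep {Θ : Type} [MeasurableSpace Θ] {ι : Type} [Fintype ι] {α : ι → Type}
    [∀ i, MeasurableSpace (α i)] (Pr : Measure Θ) (X : ∀ i, Θ → α i) (δ : ℝ) : Prop :=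
  tvDist (Pr.map fun ω i => X i ω) (Measure.pi fun i => Pr.map (X i)) ≤ δ

/-- Replacing a random variable by another one changes the measure of an event by at most the
probability that they differ. The set `{A ≠ B}` need not be measurable: only
(outer-measure) monotonicity and subadditivity are used. -/
lemma map_apply_le_add {Θ α : Type*} [MeasurableSpace Θ] [MeasurableSpace α]
    (Pr : Measure Θ) {A B : Θ → α} (hA : Measurable A) (hB : Measurable B)
    {s : Set α} (hs : MeasurableSet s) :
    Pr.map A s ≤ Pr.map B s + Pr {ω | A ω ≠ B ω} := by
  rw [Measure.map_apply hA hs, Measure.map_apply hB hs]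
  refine (measure_mono fun ω hω => ?_).trans (measure_union_le _ _)
  by_cases h : A ω = B ω
  · exact Or.inl (show B ω ∈ s from h ▸ hω)
  · exact Or.inr h

lemma prod_apply_le_add {α γ : Type*} [MeasurableSpace α] [MeasurableSpace γ]
    {μ ν : Measure α} [SFinite μ] [SFinite ν] (ρ : Measure γ) [IsProbabilityMeasure ρ]
    {d : ENNReal} (h : ∀ s, MeasurableSet s → μ s ≤ ν s + d)
    {s : Set (α × γ)} (hs : MeasurableSet s) :
    μ.prod ρ s ≤ ν.prod ρ s + d := by
  rw [Measure.prod_apply_symm hs, Measure.prod_apply_symm hs]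
  calc ∫⁻ c, μ ((fun x => (x, c)) ⁻¹' s) ∂ρ
      ≤ ∫⁻ c, (ν ((fun x => (x, c)) ⁻¹' s) + d) ∂ρ :=
        lintegral_mono fun c => h _ (measurable_prodMk_right hs)
    _ = ∫⁻ c, ν ((fun x => (x, c)) ⁻¹' s) ∂ρ + d := by
        rw [lintegral_add_right _ measurable_const]
        simp

lemma abs_toReal_sub_le {a b d : ENNReal} (ha : a ≠ ⊤) (hb : b ≠ ⊤) (hd : d ≠ ⊤)
    (h₁ : a ≤ b + d) (h₂ : b ≤ a + d) : |a.toReal - b.toReal| ≤ d.toReal := by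
  have h₁' := ENNReal.toReal_mono (ENNReal.add_ne_top.2 ⟨hb, hd⟩) h₁
  have h₂' := ENNReal.toReal_mono (ENNReal.add_ne_top.2 ⟨ha, hd⟩) h₂
  rw [ENNReal.toReal_add hb hd] at h₁'
  rw [ENNReal.toReal_add ha hd] at h₂'
  rw [abs_le]
  constructor <;> linarith

/-- For probability measures the supremum defining `tvDist` is over a bounded family, so it
really is an upper bound for the discrepancy on each measurable set. -/
lemma abs_sub_le_tvDist {α : Type} [MeasurableSpace α] (μ ν : Measure α)
    [IsProbabilityMeasure μ] [IsProbabilityMeasure ν] {s : Set α} (hs : MeasurableSet s) :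
    |(μ s).toReal - (ν s).toReal| ≤ tvDist μ ν := by
  refine le_ciSup (f := fun s : {s : Set α // MeasurableSet s} =>
    |(μ s.1).toReal - (ν s.1).toReal|) ⟨1, ?_⟩ ⟨s, hs⟩
  rintro _ ⟨t, rfl⟩
  have h₁ : (μ t.1).toReal ≤ 1 := measureReal_le_one
  have h₂ : (ν t.1).toReal ≤ 1 := measureReal_le_one
  have h₃ : 0 ≤ (μ t.1).toReal := ENNReal.toReal_nonneg
  have h₄ : 0 ≤ (ν t.1).toReal := ENNReal.toReal_nonneg
  exact abs_le.2 ⟨by linarith, by linarith⟩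

/-- **Claim 3.14 of Mossel–Sly–Tamuz.** If `P(A ≠ B) ≤ δ` and `(B, C)` are `δ'`-independent
then `(A, C)` are `(2δ + δ')`-independent. -/
theorem delta_independent_of_close {Θ α γ : Type} [MeasurableSpace Θ] [MeasurableSpace α]
    [MeasurableSpace γ] (Pr : Measure Θ) [IsProbabilityMeasure Pr]
    (A B : Θ → α) (C : Θ → γ)
    (hA : Measurable A) (hB : Measurable B) (hC : Measurable C)
    (δ δ' : ℝ)
    (hAB : (Pr {ω | A ω ≠ B ω}).toReal ≤ δ)
    (hBC : PairIndep Pr B C δ') :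
    PairIndep Pr A C (2 * δ + δ') := by
  have iA : IsProbabilityMeasure (Pr.map A) := Measure.isProbabilityMeasure_map hA.aemeasurable
  have iB : IsProbabilityMeasure (Pr.map B) := Measure.isProbabilityMeasure_map hB.aemeasurable
  have iC : IsProbabilityMeasure (Pr.map C) := Measure.isProbabilityMeasure_map hC.aemeasurable
  have hAC : Measurable fun ω => (A ω, C ω) := hA.prodMk hC
  have hBC' : Measurable fun ω => (B ω, C ω) := hB.prodMk hC
  have iAC := Measure.isProbabilityMeasure_map (μ := Pr) hAC.aemeasurable
  have iBC := Measure.isProbabilityMeasure_map (μ := Pr) hBC'.aemeasurable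
  have hsymm : {ω | B ω ≠ A ω} = {ω | A ω ≠ B ω} := by
    ext ω
    exact ne_comm
  have hpair : {ω | (A ω, C ω) ≠ (B ω, C ω)} = {ω | A ω ≠ B ω} := by
    ext ω
    simp
  have hpair' : {ω | (B ω, C ω) ≠ (A ω, C ω)} = {ω | A ω ≠ B ω} := by
    ext ω
    simp [eq_comm]
  have : Nonempty {s : Set (α × γ) // MeasurableSet s} := ⟨⟨∅, MeasurableSet.empty⟩⟩
  refine ciSup_le ?_
  rintro ⟨s, hs⟩
  have hjoint : |(Pr.map (fun ω => (A ω, C ω)) s).toReal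
      - (Pr.map (fun ω => (B ω, C ω)) s).toReal| ≤ δ := by
    refine (abs_toReal_sub_le (measure_ne_top _ _) (measure_ne_top _ _)
      (measure_ne_top Pr {ω | A ω ≠ B ω}) ?_ ?_).trans hAB
    · exact hpair ▸ map_apply_le_add Pr hAC hBC' hs
    · exact hpair' ▸ map_apply_le_add Pr hBC' hAC hs
  have hprod : |((Pr.map B).prod (Pr.map C) s).toReal
      - ((Pr.map A).prod (Pr.map C) s).toReal| ≤ δ := by
    refine (abs_toReal_sub_le (measure_ne_top _ _) (measure_ne_top _ _)
      (measure_ne_top Pr {ω | A ω ≠ B ω}) ?_ ?_).trans hAB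
    · exact prod_apply_le_add _ (fun t ht => hsymm ▸ map_apply_le_add Pr hB hA ht) hs
    · exact prod_apply_le_add _ (fun t ht => map_apply_le_add Pr hA hB ht) hs
  have hmid := (abs_sub_le_tvDist _ _ hs).trans hBC
  rw [abs_le] at hjoint hprod hmid
  exact abs_le.2 ⟨by linarith, by linarith⟩
end
end

section
/- Let (X, Y) be δ-independent random variables, let B be a random variable independent of the pair (X, Y), and let Z = f(Y, B) for some measurable function f. Then (X, Z) are δ-independent. -/
/-! Put `P` for the law of `(X, Y)`, `Q` for the product of the laws of `X` and `Y`, and `κ` for the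
law of `B`. By independence of `B` from `(X, Y)`, the joint law of `(X, Z)` and the product of its
marginals are the images of `P ⊗ κ` and `Q ⊗ κ` under the same map `((x, y), b) ↦ (x, f (y, b))`.
Total variation distance does not increase under a measurable map (`tvDist_map_le`), nor under
tensoring with a fixed probability measure (`tvDist_prod_right_le`, by integrating the bound on
each slice). -/

open MeasureTheory ProbabilityTheory Filter Set

noncomputable section

lemma tvDist_le {α : Type} [MeasurableSpace α] {μ ν : Measure α} {d : ℝ}
    (h : ∀ s, MeasurableSet s → |(μ s).toReal - (ν s).toReal| ≤ d) : tvDist μ ν ≤ d :=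
  haveI : Nonempty {s : Set α // MeasurableSet s} := ⟨⟨∅, MeasurableSet.empty⟩⟩
  ciSup_le fun s => h s.1 s.2

lemma tvDist_nonneg {α : Type} [MeasurableSpace α] (μ ν : Measure α) : 0 ≤ tvDist μ ν :=
  Real.iSup_nonneg fun _ => abs_nonneg _

lemma tvDist_comm {α : Type} [MeasurableSpace α] (μ ν : Measure α) : tvDist μ ν = tvDist ν μ := by
  simp only [tvDist, abs_sub_comm]

lemma measure_le_add_tvDist {α : Type} [MeasurableSpace α] (μ ν : Measure α)
    [IsProbabilityMeasure μ] [IsProbabilityMeasure ν] {s : Set α} (hs : MeasurableSet s) :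
    μ s ≤ ν s + ENNReal.ofReal (tvDist μ ν) := by
  have h := (abs_le.1 (abs_sub_le_tvDist μ ν hs)).2
  rw [← ENNReal.ofReal_toReal (measure_ne_top μ s), ← ENNReal.ofReal_toReal (measure_ne_top ν s),
    ← ENNReal.ofReal_add ENNReal.toReal_nonneg (tvDist_nonneg μ ν)]
  exact ENNReal.ofReal_le_ofReal (by linarith)

lemma tvDist_map_le {α β : Type} [MeasurableSpace α] [MeasurableSpace β] (μ ν : Measure α)
    [IsProbabilityMeasure μ] [IsProbabilityMeasure ν] {g : α → β} (hg : Measurable g) :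
    tvDist (μ.map g) (ν.map g) ≤ tvDist μ ν := by
  refine tvDist_le fun s hs => ?_
  rw [Measure.map_apply hg hs, Measure.map_apply hg hs]
  exact abs_sub_le_tvDist μ ν (hg hs)

/-- One-sided bound on product measures, obtained by integrating the bound on each slice. -/
lemma prod_le_add_tvDist {α γ : Type} [MeasurableSpace α] [MeasurableSpace γ] (μ ν : Measure α)
    (κ : Measure γ) [IsProbabilityMeasure μ] [IsProbabilityMeasure ν] [IsProbabilityMeasure κ]
    {s : Set (α × γ)} (hs : MeasurableSet s) :
    ((μ.prod κ) s).toReal ≤ ((ν.prod κ) s).toReal + tvDist μ ν := by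
  have h : (μ.prod κ) s ≤ (ν.prod κ) s + ENNReal.ofReal (tvDist μ ν) := by
    rw [Measure.prod_apply_symm hs, Measure.prod_apply_symm hs]
    calc ∫⁻ b, μ ((fun x => (x, b)) ⁻¹' s) ∂κ
        ≤ ∫⁻ b, (ν ((fun x => (x, b)) ⁻¹' s) + ENNReal.ofReal (tvDist μ ν)) ∂κ :=
          lintegral_mono fun b => measure_le_add_tvDist μ ν (measurable_prodMk_right hs)
      _ = _ := by
          rw [lintegral_add_right _ measurable_const, lintegral_const, measure_univ, mul_one]
  have h' := ENNReal.toReal_mono (by finiteness) h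
  rwa [ENNReal.toReal_add (by finiteness) (by finiteness),
    ENNReal.toReal_ofReal (tvDist_nonneg μ ν)] at h'

lemma tvDist_prod_right_le {α γ : Type} [MeasurableSpace α] [MeasurableSpace γ] (μ ν : Measure α)
    (κ : Measure γ) [IsProbabilityMeasure μ] [IsProbabilityMeasure ν] [IsProbabilityMeasure κ] :
    tvDist (μ.prod κ) (ν.prod κ) ≤ tvDist μ ν := by
  refine tvDist_le fun s hs => ?_
  have h1 := prod_le_add_tvDist μ ν κ hs
  have h2 := prod_le_add_tvDist ν μ κ hs
  rw [tvDist_comm ν μ] at h2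
  rw [abs_le]
  constructor <;> linarith

/-- **Claim 3.15 of Mossel–Sly–Tamuz.** If `(X, Y)` are `δ`-independent, `B` is independent
of the pair `(X, Y)`, and `Z = f(Y, B)` for a measurable `f`, then `(X, Z)` are
`δ`-independent. -/
theorem delta_independent_function {Θ α β γ ζ : Type} [MeasurableSpace Θ] [MeasurableSpace α]
    [MeasurableSpace β] [MeasurableSpace γ] [MeasurableSpace ζ]
    (Pr : Measure Θ) [IsProbabilityMeasure Pr]
    (X : Θ → α) (Y : Θ → β) (B : Θ → γ) (f : β × γ → ζ)
    (hX : Measurable X) (hY : Measurable Y) (hB : Measurable B) (hf : Measurable f)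
    (δ : ℝ)
    (hXY : PairIndep Pr X Y δ)
    (hBind : IndepFun (fun ω => (X ω, Y ω)) B Pr) :
    PairIndep Pr X (fun ω => f (Y ω, B ω)) δ := by
  have hXYm : Measurable fun ω => (X ω, Y ω) := hX.prodMk hY
  have := Measure.isProbabilityMeasure_map (μ := Pr) hX.aemeasurable
  have := Measure.isProbabilityMeasure_map (μ := Pr) hY.aemeasurable
  have := Measure.isProbabilityMeasure_map (μ := Pr) hB.aemeasurable
  have := Measure.isProbabilityMeasure_map (μ := Pr) hXYm.aemeasurable
  have hg : Measurable fun p : (α × β) × γ => (p.1.1, f (p.1.2, p.2)) := by fun_prop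
  have hYB : IndepFun Y B Pr := hBind.comp measurable_snd measurable_id
  have joint : (Pr.map fun ω => (X ω, f (Y ω, B ω))) =
      ((Pr.map fun ω => (X ω, Y ω)).prod (Pr.map B)).map
        fun p => (p.1.1, f (p.1.2, p.2)) := by
    rw [← (indepFun_iff_map_prod_eq_prod_map_map hXYm.aemeasurable hB.aemeasurable).1 hBind,
      Measure.map_map hg (hXYm.prodMk hB)]
    rfl
  have marg : (Pr.map X).prod (Pr.map fun ω => f (Y ω, B ω)) =
      (((Pr.map X).prod (Pr.map Y)).prod (Pr.map B)).map
        fun p => (p.1.1, f (p.1.2, p.2)) := by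
    have hZ : (Pr.map fun ω => f (Y ω, B ω)) = ((Pr.map Y).prod (Pr.map B)).map f := by
      rw [← (indepFun_iff_map_prod_eq_prod_map_map hY.aemeasurable hB.aemeasurable).1 hYB,
        Measure.map_map hf (hY.prodMk hB)]
      rfl
    rw [hZ]
    conv_lhs => rw [← Measure.map_id (μ := Pr.map X)]
    rw [Measure.map_prod_map _ _ measurable_id hf, ← Measure.prodAssoc_prod,
      Measure.map_map (measurable_id.prodMap hf) MeasurableEquiv.prodAssoc.measurable]
    rfl
  unfold PairIndep at hXY ⊢
  rw [joint, marg]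
  exact (tvDist_map_le _ _ hg).trans ((tvDist_prod_right_le _ _ _).trans hXY)
end
end
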